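/- There exists a constant $c > 0$ such that for all sufficiently large $x$ and every integer $k$ with $|k - \log\log x| \le C \sqrt{\log\log x}$ (for any fixed $C > 0$), the number of $n \le x$ such that $n(n+1)$ is squarefree and $\omega(n) = k$ is at least $c_C \, x / \sqrt{\log\log x}$, where $c_C > 0$ depends only on $C$. -/

import Mathlib

/-!
Count the integers `n = m * p` with `m ≤ N ^ 6` a squarefree `N`-smooth number having `k - 1` prime
factors, `p > N` prime and `N` a small power of `x`; here `m` is a multiple of the primorial of a
large constant `Q`. Then `ω(n) = k`, the pair `(m, p)` is determined by `n`, and no prime up to `Q`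
divides `m * p + 1`.

For fixed `m`, a positive proportion of the primes `p ≤ x / m` make `m * p + 1` squarefree. Indeed,
for a prime `q > Q` the primes `p` with `q ^ 2 ∣ m * p + 1` lie in one residue class; the product of
these primes, times the part of `H !` prime to `q`, divides a product of `H` terms of that class,
which bounds `∑ log p` by `O(y * log q / q ^ 2 + log q)` with `y = x / m`, and the sum over `q > Q`
is small compared to `y`.

It remains to bound `∑ 1 / m` from below. With `S = ∑ 1 / p` over `Q < p ≤ N`, the sum of `1 / m`
over products of `j` distinct such primes is of order `S ^ j / j !`, and by Markov's inequality
applied to `∑ log p` the products exceeding the size restriction contribute only a fraction of it.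
By Mertens' theorem `S = log log N + O(1)`, so Stirling's formula gives `S ^ j / j ! ≫ exp S / √S`
for `|j - S| ≪ √S`.
-/

open Finset

section SymmetricSums

variable {ι R : Type*}

section OrderedRing

variable [CommRing R] [LinearOrder R] [IsStrictOrderedRing R]

theorem mul_sum_filter_lt_le {s : Finset ι} {g w : ι → R} (hg : ∀ i ∈ s, 0 ≤ g i)
    (hw : ∀ i ∈ s, 0 ≤ w i) (L : R) :
    L * ∑ i ∈ s with L < g i, w i ≤ ∑ i ∈ s, g i * w i := by
  rw [mul_sum]
  refine (sum_le_sum fun i hi ↦ ?_).trans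
    (sum_le_sum_of_subset_of_nonneg (filter_subset (L < g ·) s) fun i hi _ ↦
      mul_nonneg (hg i hi) (hw i hi))
  obtain ⟨his, hi⟩ := mem_filter.1 hi
  exact mul_le_mul_of_nonneg_right hi.le (hw i his)

theorem sum_powersetCard_prod_nonneg {s : Finset ι} {a : ι → R} (ha : ∀ i ∈ s, 0 ≤ a i)
    (j : ℕ) :
    0 ≤ ∑ t ∈ s.powersetCard j, ∏ i ∈ t, a i :=
  sum_nonneg fun _ ht ↦ prod_nonneg fun i hi ↦ ha i ((mem_powersetCard.1 ht).1 hi)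

theorem sum_powersetCard_prod_erase_le [DecidableEq ι] {s : Finset ι} {a : ι → R}
    (ha : ∀ i ∈ s, 0 ≤ a i) (i : ι) (j : ℕ) :
    ∑ t ∈ (s.erase i).powersetCard j, ∏ i ∈ t, a i ≤ ∑ t ∈ s.powersetCard j, ∏ i ∈ t, a i :=
  sum_le_sum_of_subset_of_nonneg (powersetCard_mono (erase_subset _ _)) fun _ ht _ ↦
    prod_nonneg fun i hi ↦ ha i ((mem_powersetCard.1 ht).1 hi)

end OrderedRing

section DecidableEq

variable [DecidableEq ι]

theorem sum_powersetCard_succ_sum_mem {M : Type*} [AddCommMonoid M] (s : Finset ι) (j : ℕ)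
    (F : ι → Finset ι → M) :
    ∑ t ∈ s.powersetCard (j + 1), ∑ i ∈ t, F i t =
      ∑ i ∈ s, ∑ t ∈ (s.erase i).powersetCard j, F i (insert i t) := by
  simp only [sum_sigma']
  refine sum_bij' (fun x _ ↦ ⟨x.2, x.1.erase x.2⟩) (fun x _ ↦ ⟨insert x.1 x.2, x.1⟩)
    ?_ ?_ ?_ ?_ ?_
  · rintro ⟨t, i⟩ h
    simp only [mem_sigma, mem_powersetCard] at h ⊢
    exact ⟨h.1.1 h.2, erase_subset_erase _ h.1.1, by rw [card_erase_of_mem h.2, h.1.2]; rfl⟩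
  · rintro ⟨i, t⟩ h
    simp only [mem_sigma, mem_powersetCard, subset_erase] at h ⊢
    exact ⟨⟨insert_subset h.1 h.2.1.1, by rw [card_insert_of_notMem h.2.1.2, h.2.2]⟩,
      mem_insert_self _ _⟩
  · rintro ⟨t, i⟩ h
    simp only [mem_sigma] at h
    simp only [insert_erase h.2]
  · rintro ⟨i, t⟩ h
    simp only [mem_sigma, mem_powersetCard, subset_erase] at h
    simp only [erase_insert h.2.1.2]
  · rintro ⟨t, i⟩ h
    simp only [mem_sigma] at h
    simp only [insert_erase h.2]

theorem sum_powersetCard_succ_sum_mul_prod [CommSemiring R] (s : Finset ι) (a g : ι → R) (j : ℕ) :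
    ∑ t ∈ s.powersetCard (j + 1), (∑ i ∈ t, g i) * ∏ i ∈ t, a i =
      ∑ i ∈ s, g i * a i * ∑ t ∈ (s.erase i).powersetCard j, ∏ i ∈ t, a i := by
  simp only [sum_mul, mul_sum]
  rw [sum_powersetCard_succ_sum_mem s j fun i t ↦ g i * ∏ i ∈ t, a i]
  refine sum_congr rfl fun i _ ↦ sum_congr rfl fun t ht ↦ ?_
  rw [prod_insert (subset_erase.1 (mem_powersetCard.1 ht).1).2, mul_assoc]

theorem succ_mul_sum_powersetCard_succ_prod [CommSemiring R] (s : Finset ι) (a : ι → R) (j : ℕ) :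
    (j + 1) * ∑ t ∈ s.powersetCard (j + 1), ∏ i ∈ t, a i =
      ∑ i ∈ s, a i * ∑ t ∈ (s.erase i).powersetCard j, ∏ i ∈ t, a i := by
  rw [mul_sum]
  convert sum_powersetCard_succ_sum_mul_prod s a 1 j using 2 with t ht
  · simp [(mem_powersetCard.1 ht).2]
  · simp

theorem sum_powersetCard_insert_prod [CommSemiring R] {s : Finset ι} {i : ι} (hi : i ∉ s)
    (a : ι → R) (j : ℕ) :
    ∑ t ∈ (insert i s).powersetCard (j + 1), ∏ i ∈ t, a i =
      ∑ t ∈ s.powersetCard (j + 1), ∏ i ∈ t, a i +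
        a i * ∑ t ∈ s.powersetCard j, ∏ i ∈ t, a i := by
  have hmem {t : Finset ι} {j : ℕ} (ht : t ∈ s.powersetCard j) : i ∉ t :=
    fun h ↦ hi ((mem_powersetCard.1 ht).1 h)
  rw [powersetCard_succ_insert hi, sum_union, sum_image, mul_sum]
  · exact congrArg _ (sum_congr rfl fun t ht ↦ prod_insert (hmem ht))
  · intro t ht u hu h
    rw [← erase_insert (hmem ht), h, erase_insert (hmem hu)]
  · refine disjoint_left.2 fun t ht ht' ↦ ?_
    obtain ⟨u, -, rfl⟩ := mem_image.1 ht'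
    exact hmem ht (mem_insert_self i u)

end DecidableEq

section ElementarySymmetricBounds

variable [CommRing R] [LinearOrder R] [IsStrictOrderedRing R] {s : Finset ι} {a : ι → R}

theorem sum_powersetCard_succ_sum_mul_prod_le {g : ι → R} (ha : ∀ i ∈ s, 0 ≤ a i)
    (hg : ∀ i ∈ s, 0 ≤ g i) (j : ℕ) :
    ∑ t ∈ s.powersetCard (j + 1), (∑ i ∈ t, g i) * ∏ i ∈ t, a i ≤
      (∑ i ∈ s, g i * a i) * ∑ t ∈ s.powersetCard j, ∏ i ∈ t, a i := by
  classical
  rw [sum_powersetCard_succ_sum_mul_prod, sum_mul]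
  exact sum_le_sum fun i hi ↦ mul_le_mul_of_nonneg_left (sum_powersetCard_prod_erase_le ha i j)
    (mul_nonneg (hg i hi) (ha i hi))

theorem mul_sum_powersetCard_succ_filter_lt_le {g : ι → R} {B : R} (ha : ∀ i ∈ s, 0 ≤ a i)
    (hg : ∀ i ∈ s, 0 ≤ g i) (hB : 0 < B) (hga : ∑ i ∈ s, g i * a i ≤ B) (L : R) (j : ℕ) :
    L * ∑ t ∈ s.powersetCard (j + 1) with L * B < ∑ i ∈ t, g i, ∏ i ∈ t, a i ≤
      ∑ t ∈ s.powersetCard j, ∏ i ∈ t, a i := by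
  have hsub {t} (ht : t ∈ s.powersetCard (j + 1)) : t ⊆ s := (mem_powersetCard.1 ht).1
  have hweighted := (sum_powersetCard_succ_sum_mul_prod_le ha hg j).trans
    (mul_le_mul_of_nonneg_right hga (sum_powersetCard_prod_nonneg ha j))
  have hmarkov := (mul_sum_filter_lt_le (L := L * B)
    (fun t ht ↦ sum_nonneg fun i hi ↦ hg i (hsub ht hi))
    (fun t ht ↦ prod_nonneg fun i hi ↦ ha i (hsub ht hi))).trans hweighted
  exact le_of_mul_le_mul_left (by linear_combination hmarkov) hB

theorem succ_mul_sum_powersetCard_succ_prod_le (ha : ∀ i ∈ s, 0 ≤ a i) (j : ℕ) :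
    (j + 1) * ∑ t ∈ s.powersetCard (j + 1), ∏ i ∈ t, a i ≤
      (∑ i ∈ s, a i) * ∑ t ∈ s.powersetCard j, ∏ i ∈ t, a i := by
  classical
  rw [succ_mul_sum_powersetCard_succ_prod, sum_mul]
  exact sum_le_sum fun i hi ↦
    mul_le_mul_of_nonneg_left (sum_powersetCard_prod_erase_le ha i j) (ha i hi)

theorem factorial_mul_sum_powersetCard_prod_le (ha : ∀ i ∈ s, 0 ≤ a i) (j : ℕ) :
    j.factorial * ∑ t ∈ s.powersetCard j, ∏ i ∈ t, a i ≤ (∑ i ∈ s, a i) ^ j := by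
  induction j with
  | zero => simp
  | succ j ih =>
    calc ((j + 1).factorial : R) * ∑ t ∈ s.powersetCard (j + 1), ∏ i ∈ t, a i
        = j.factorial * ((j + 1) * ∑ t ∈ s.powersetCard (j + 1), ∏ i ∈ t, a i) := by
          rw [Nat.factorial_succ]; push_cast; ring
      _ ≤ j.factorial * ((∑ i ∈ s, a i) * ∑ t ∈ s.powersetCard j, ∏ i ∈ t, a i) :=
          mul_le_mul_of_nonneg_left (succ_mul_sum_powersetCard_succ_prod_le ha j) (by positivity)
      _ = (∑ i ∈ s, a i) * (j.factorial * ∑ t ∈ s.powersetCard j, ∏ i ∈ t, a i) := by ring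
      _ ≤ (∑ i ∈ s, a i) * (∑ i ∈ s, a i) ^ j := mul_le_mul_of_nonneg_left ih (sum_nonneg ha)
      _ = (∑ i ∈ s, a i) ^ (j + 1) := (pow_succ' _ _).symm

theorem sum_mul_sum_powersetCard_prod_sub_le (ha : ∀ i ∈ s, 0 ≤ a i) (j : ℕ) :
    (∑ i ∈ s, a i) * ∑ t ∈ s.powersetCard (j + 1), ∏ i ∈ t, a i -
        (∑ i ∈ s, a i ^ 2) * ∑ t ∈ s.powersetCard j, ∏ i ∈ t, a i ≤
      (j + 2) * ∑ t ∈ s.powersetCard (j + 2), ∏ i ∈ t, a i := by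
  classical
  have hsucc := succ_mul_sum_powersetCard_succ_prod s a (j + 1)
  push_cast at hsucc
  rw [show (j : R) + 2 = j + 1 + 1 by ring, hsucc, sum_mul, sum_mul, ← sum_sub_distrib]
  refine sum_le_sum fun i hi ↦ ?_
  have hinsert := sum_powersetCard_insert_prod (notMem_erase i s) a j
  rw [insert_erase hi] at hinsert
  have herase := mul_le_mul_of_nonneg_left (sum_powersetCard_prod_erase_le ha i j)
    (sq_nonneg (a i))
  rw [hinsert]
  linear_combination herase

theorem sub_le_factorial_mul_sum_powersetCard_prod (ha : ∀ i ∈ s, 0 ≤ a i) (j : ℕ) :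
    (∑ i ∈ s, a i) ^ j - j.choose 2 * (∑ i ∈ s, a i ^ 2) * (∑ i ∈ s, a i) ^ (j - 2) ≤
      j.factorial * ∑ t ∈ s.powersetCard j, ∏ i ∈ t, a i := by
  induction j with
  | zero => simp
  | succ j ih =>
    obtain _ | j := j
    · simp [powersetCard_one]
    have hrec := mul_le_mul_of_nonneg_left (sum_mul_sum_powersetCard_prod_sub_le ha j)
      (Nat.cast_nonneg' (j + 1).factorial)
    have hprev := mul_le_mul_of_nonneg_left ih (sum_nonneg ha)
    have hsq : 0 ≤ ∑ i ∈ s, a i ^ 2 := sum_nonneg fun i _ ↦ sq_nonneg (a i)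
    have hupper := mul_le_mul_of_nonneg_left (factorial_mul_sum_powersetCard_prod_le ha j)
      (mul_nonneg (Nat.cast_nonneg' (j + 1)) hsq)
    have hchoose : ((j + 2).choose 2 : R) = (j + 1).choose 2 + (j + 1) := by
      rw [Nat.choose_succ_succ' (j + 1) 1, Nat.choose_one_right]; push_cast; ring
    have hpow : ((j + 1).choose 2 : R) * (∑ i ∈ s, a i) ^ j =
        (j + 1).choose 2 * ((∑ i ∈ s, a i) * (∑ i ∈ s, a i) ^ (j - 1)) := by
      obtain _ | j := j
      · simp
      · rw [← pow_succ']; rfl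
    rw [Nat.factorial_succ (j + 1), show j + 1 + 1 - 2 = j by omega, hchoose]
    rw [Nat.factorial_succ j] at hrec hprev ⊢
    push_cast at hrec hprev hupper ⊢
    linear_combination hrec + hprev + hupper - (∑ i ∈ s, a i ^ 2) * hpow

end ElementarySymmetricBounds

section Field

variable {K : Type*} [Field K] [LinearOrder K] [IsStrictOrderedRing K]

theorem pow_le_mul_factorial_mul_sum_powersetCard_prod {s : Finset ι} {a : ι → K}
    (ha : ∀ i ∈ s, 0 ≤ a i) (ha2 : ∑ i ∈ s, a i ^ 2 ≤ 1 / 8) {j : ℕ}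
    (hjS : j ≤ 2 * ∑ i ∈ s, a i) :
    3 / 4 * (∑ i ∈ s, a i) ^ j ≤ j.factorial * ∑ t ∈ s.powersetCard j, ∏ i ∈ t, a i := by
  refine le_trans ?_ (sub_le_factorial_mul_sum_powersetCard_prod ha j)
  have hS := sum_nonneg ha
  set S := ∑ i ∈ s, a i
  obtain hj | hj := lt_or_ge j 2
  · rw [Nat.choose_eq_zero_of_lt hj]
    linear_combination (1 / 4) * pow_nonneg hS j
  have hchoose : (j.choose 2 : K) ≤ 2 * S ^ 2 := by
    rw [Nat.cast_choose_two]
    nlinarith [(Nat.cast_nonneg' j : (0 : K) ≤ j)]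
  have hmul : (j.choose 2 : K) * (∑ i ∈ s, a i ^ 2) ≤ 2 * S ^ 2 * (1 / 8) := by
    gcongr
  calc 3 / 4 * S ^ j = S ^ j - 2 * S ^ 2 * (1 / 8) * S ^ (j - 2) := by
        rw [← Nat.sub_add_cancel hj, pow_add, Nat.add_sub_cancel]; ring
    _ ≤ S ^ j - j.choose 2 * (∑ i ∈ s, a i ^ 2) * S ^ (j - 2) := by gcongr

theorem pow_div_factorial_le_sum_powersetCard_filter {s : Finset ι} {a g : ι → K} {B : K} {j : ℕ}
    (ha : ∀ i ∈ s, 0 ≤ a i) (hg : ∀ i ∈ s, 0 ≤ g i) (ha2 : ∑ i ∈ s, a i ^ 2 ≤ 1 / 8)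
    (hB : 0 < B) (hga : ∑ i ∈ s, g i * a i ≤ B) (hj : 1 ≤ j) (hjS : j ≤ 2 * ∑ i ∈ s, a i) :
    (∑ i ∈ s, a i) ^ j / (4 * j.factorial) ≤
      ∑ t ∈ s.powersetCard j with ∑ i ∈ t, g i ≤ 5 * B, ∏ i ∈ t, a i := by
  obtain ⟨j, rfl⟩ := Nat.exists_eq_add_of_le' hj
  have hS := sum_nonneg ha
  have hlower := pow_le_mul_factorial_mul_sum_powersetCard_prod ha ha2 hjS
  have hupper := factorial_mul_sum_powersetCard_prod_le ha j
  have htail := mul_sum_powersetCard_succ_filter_lt_le ha hg hB hga 5 j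
  have hsplit := sum_filter_add_sum_filter_not (s.powersetCard (j + 1))
    (fun t ↦ ∑ i ∈ t, g i ≤ 5 * B) fun t ↦ ∏ i ∈ t, a i
  simp only [not_le] at hsplit
  set S := ∑ i ∈ s, a i
  set E := ∑ t ∈ s.powersetCard j, ∏ i ∈ t, a i
  set large := ∑ t ∈ s.powersetCard (j + 1) with 5 * B < ∑ i ∈ t, g i, ∏ i ∈ t, a i
  have hlarge : large ≤ E / 5 := (le_div_iff₀' (by norm_num)).2 htail
  have hfactorial : ((j + 1).factorial : K) = (j + 1) * j.factorial := by
    rw [Nat.factorial_succ]; push_cast; ring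
  have hlarge' : ((j + 1).factorial : K) * large ≤ 2 / 5 * S ^ (j + 1) :=
    calc ((j + 1).factorial : K) * large ≤ (j + 1) * j.factorial * (E / 5) := by
          rw [hfactorial]; gcongr
      _ = (j + 1) / 5 * (j.factorial * E) := by ring
      _ ≤ 2 * S / 5 * S ^ j := by
          push_cast at hjS
          gcongr
          exact mul_nonneg (Nat.cast_nonneg' _) (sum_powersetCard_prod_nonneg ha j)
      _ = 2 / 5 * S ^ (j + 1) := by ring
  rw [div_le_iff₀ (by positivity)]
  rw [← hsplit] at hlower
  linear_combination 4 * (hlower + hlarge') + (2 / 5) * pow_nonneg hS (j + 1)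

end Field

end SymmetricSums

section Mertens

open Nat (primesLE)

theorem prod_primesLE_pow_div_dvd_factorial (N : ℕ) :
    ∏ p ∈ primesLE N, p ^ (N / p) ∣ N.factorial := by
  refine Finset.prod_dvd_of_isRelPrime (fun p hp q hq hpq ↦ ?_) fun p hp ↦ ?_
  · have hcoprime := (Nat.coprime_primes (Nat.prime_of_mem_primesLE hp)
      (Nat.prime_of_mem_primesLE hq)).2 hpq
    exact Nat.coprime_iff_isRelPrime.1 (hcoprime.pow _ _)
  · have hprime := Nat.prime_of_mem_primesLE hp
    have hlog := Nat.log_pos hprime.one_lt (Nat.le_of_mem_primesLE hp)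
    rw [hprime.pow_dvd_iff_le_factorization N.factorial_ne_zero,
      Nat.factorization_factorial hprime (Nat.lt_succ_self _)]
    simpa only [pow_one] using single_le_sum (f := fun i ↦ N / p ^ i) (fun _ _ ↦ Nat.zero_le _)
      (mem_Ico.2 ⟨le_rfl, Nat.succ_lt_succ hlog⟩)

theorem sum_log_eq_log_prod {s : Finset ℕ} (hs : ∀ n ∈ s, n ≠ 0) :
    ∑ n ∈ s, Real.log n = Real.log (∏ n ∈ s, n : ℕ) := by
  rw [Nat.cast_prod, Real.log_prod fun n hn ↦ Nat.cast_ne_zero.2 (hs n hn)]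

theorem sum_primesLE_div_mul_log_le (N : ℕ) :
    ∑ p ∈ primesLE N, (N / p : ℕ) * Real.log p ≤ N * Real.log N := by
  have hpos : 0 < ∏ p ∈ primesLE N, p ^ (N / p) :=
    prod_pos fun p hp ↦ pow_pos (Nat.prime_of_mem_primesLE hp).pos _
  have hle : ∏ p ∈ primesLE N, p ^ (N / p) ≤ N ^ N :=
    (Nat.le_of_dvd N.factorial_pos (prod_primesLE_pow_div_dvd_factorial N)).trans
      (Nat.factorial_le_pow N)
  calc ∑ p ∈ primesLE N, (N / p : ℕ) * Real.log p
      = Real.log (∏ p ∈ primesLE N, p ^ (N / p) : ℕ) := by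
        rw [Nat.cast_prod, Real.log_prod fun p hp ↦
          Nat.cast_ne_zero.2 (pow_pos (Nat.prime_of_mem_primesLE hp).pos _).ne']
        simp only [Nat.cast_pow, Real.log_pow]
    _ ≤ Real.log (N ^ N : ℕ) := Real.log_le_log (mod_cast hpos) (mod_cast hle)
    _ = N * Real.log N := by rw [Nat.cast_pow, Real.log_pow]

theorem sum_primesLE_log_div_le (N : ℕ) :
    ∑ p ∈ primesLE N, Real.log p / p ≤ Real.log N + Real.log 4 := by
  obtain rfl | hN := N.eq_zero_or_pos
  · simp [Real.log_nonneg]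
  have htheta := Chebyshev.theta_le_log4_mul_x (Nat.cast_nonneg (α := ℝ) N)
  rw [Chebyshev.theta_eq_sum_primesLE_log] at htheta
  refine le_of_mul_le_mul_left (a := (N : ℝ)) ?_ (mod_cast hN)
  calc N * ∑ p ∈ primesLE N, Real.log p / p
      ≤ ∑ p ∈ primesLE N, ((N / p : ℕ) * Real.log p + Real.log p) := by
        rw [mul_sum]
        refine sum_le_sum fun p _ ↦ ?_
        have hfloor := (Nat.lt_floor_add_one ((N : ℝ) / p)).le
        rw [Nat.floor_div_natCast, Nat.floor_natCast] at hfloor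
        linear_combination Real.log p * hfloor
    _ ≤ N * (Real.log N + Real.log 4) := by
        rw [sum_add_distrib]
        linear_combination sum_primesLE_div_mul_log_le N + htheta

theorem mul_inv_sub_inv_le_log_sub_log {a u v : ℝ} (hu : 0 < u) (huv : u ≤ v) (ha : a ≤ u) :
    a * (u⁻¹ - v⁻¹) ≤ Real.log v - Real.log u := by
  have hv := hu.trans_le huv
  calc a * (u⁻¹ - v⁻¹) ≤ u * (u⁻¹ - v⁻¹) :=
        mul_le_mul_of_nonneg_right ha (sub_nonneg.2 (inv_anti₀ hu huv))
    _ = 1 - (v / u)⁻¹ := by field_simp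
    _ ≤ Real.log (v / u) := Real.one_sub_inv_le_log_of_pos (div_pos hv hu)
    _ = Real.log v - Real.log u := Real.log_div hv.ne' hu.ne'

-- Discrete partial summation: the left-hand side minus `log (log N)` is antitone in `N`.
theorem sum_primesLE_inv_sub_sum_log_div_le {N : ℕ} (hN : 2 ≤ N) :
    ∑ p ∈ primesLE N, (1 : ℝ) / p -
        (∑ p ∈ primesLE N, Real.log p / p - Real.log 4) / Real.log N ≤
      Real.log (Real.log N) + (2 - Real.log (Real.log 2)) := by
  induction N, hN using Nat.le_induction with
  | base =>
    have htwo : primesLE 2 = {2} := by decide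
    have hlog4 : Real.log 4 = 2 * Real.log 2 := by
      rw [← Real.log_rpow two_pos]; norm_num
    rw [htwo, sum_singleton, sum_singleton, hlog4]
    push_cast
    field_simp
    linarith
  | succ N hN ih =>
    have hL : 0 < Real.log N := Real.log_pos (by exact_mod_cast hN)
    have hLL' : Real.log N ≤ Real.log (N + 1 : ℕ) :=
      Real.log_le_log (by positivity) (by push_cast; linarith)
    have hL' := hL.trans_le hLL'
    have hdiff : ∑ p ∈ primesLE (N + 1), (1 : ℝ) / p -
        (∑ p ∈ primesLE (N + 1), Real.log p / p - Real.log 4) / Real.log (N + 1 : ℕ) =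
        ∑ p ∈ primesLE N, (1 : ℝ) / p -
          (∑ p ∈ primesLE N, Real.log p / p - Real.log 4) / Real.log (N + 1 : ℕ) := by
      rw [Nat.primesLE_succ]
      split_ifs
      · have hnotMem := Nat.notMem_primesLE N
        rw [sum_insert hnotMem, sum_insert hnotMem]
        field_simp
        ring
      · rfl
    have hstep := mul_inv_sub_inv_le_log_sub_log hL hLL'
      (sub_le_iff_le_add.2 (sum_primesLE_log_div_le N))
    rw [hdiff]
    simp only [div_eq_mul_inv _ (Real.log _)] at ih ⊢
    linear_combination ih + hstep

theorem sum_primesLE_inv_le {N : ℕ} (hN : 2 ≤ N) :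
    ∑ p ∈ primesLE N, (1 : ℝ) / p ≤ Real.log (Real.log N) + (3 - Real.log (Real.log 2)) := by
  have hL : 0 < Real.log N := Real.log_pos (by exact_mod_cast hN)
  have hle : (∑ p ∈ primesLE N, Real.log p / p - Real.log 4) / Real.log N ≤ 1 := by
    rw [div_le_one hL]
    linarith [sum_primesLE_log_div_le N]
  linear_combination sum_primesLE_inv_sub_sum_log_div_le hN + hle

theorem sum_inv_sq_le {s : Finset ℕ} {Q : ℕ} (hs : ∀ n ∈ s, Q < n) :
    ∑ n ∈ s, ((1 : ℝ) / n) ^ 2 ≤ 2 / (Q + 1) := by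
  refine le_trans ?_ (sum_Ioo_inv_sq_le (α := ℝ) Q (s.sup id + 1))
  simp only [one_div, inv_pow]
  refine sum_le_sum_of_subset_of_nonneg (fun n hn ↦ mem_Ioo.2 ⟨hs n hn, ?_⟩)
    fun _ _ _ ↦ by positivity
  exact Nat.lt_succ_of_le (le_sup (f := id) hn)

theorem log_add_one_le_prod_primesLE (N : ℕ) :
    Real.log (N + 1 : ℕ) ≤ ∏ p ∈ primesLE N, (1 - (1 : ℝ) / p)⁻¹ := by
  let f : ℕ →* ℝ := ⟨⟨fun n ↦ (n : ℝ)⁻¹, by simp⟩, fun m n ↦ by simp [mul_comm]⟩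
  have hf {p : ℕ} (hp : p.Prime) : ‖f p‖ < 1 := by
    simpa [f] using inv_lt_one_of_one_lt₀ (Nat.one_lt_cast.2 hp.one_lt)
  obtain ⟨-, hsum⟩ :=
    EulerProduct.summable_and_hasSum_smoothNumbers_prod_primesBelow_geometric hf (N + 1)
  have hsmooth (n : ℕ) (hn : n ∈ Icc 1 N) : n ∈ (N + 1).smoothNumbers :=
    Nat.mem_smoothNumbers_of_lt (mem_Icc.1 hn).1 (Nat.lt_succ_of_le (mem_Icc.1 hn).2)
  have hpartial := sum_le_hasSum ((Icc 1 N).subtype (· ∈ (N + 1).smoothNumbers))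
    (fun n _ ↦ inv_nonneg.2 n.1.cast_nonneg) hsum
  rw [sum_subtype_of_mem (fun n ↦ f n) hsmooth] at hpartial
  have hharmonic := log_add_one_le_harmonic N
  rw [harmonic_eq_sum_Icc] at hharmonic
  push_cast at hharmonic ⊢
  simpa [f, primesLE] using hharmonic.trans hpartial

theorem neg_log_one_sub_le {u : ℝ} (hu : u ≤ 1 / 2) : -Real.log (1 - u) ≤ u + 2 * u ^ 2 := by
  have hpos : 0 < 1 - u := by linarith
  have hinv : (1 - u)⁻¹ ≤ 1 + u + 2 * u ^ 2 := by
    rw [inv_le_iff_one_le_mul₀ hpos]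
    nlinarith [mul_nonneg (sq_nonneg u) (sub_nonneg.2 hu)]
  linarith [Real.one_sub_inv_le_log_of_pos hpos]

theorem log_log_sub_le_sum_primesLE_inv {N : ℕ} (hN : 2 ≤ N) :
    Real.log (Real.log N) - 4 ≤ ∑ p ∈ primesLE N, (1 : ℝ) / p := by
  have hprime {p : ℕ} (hp : p ∈ primesLE N) : (1 : ℝ) / p ≤ 1 / 2 :=
    one_div_le_one_div_of_le two_pos (mod_cast (Nat.prime_of_mem_primesLE hp).two_le)
  have hL : 0 < Real.log N := Real.log_pos (by exact_mod_cast hN)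
  calc Real.log (Real.log N) - 4
      ≤ Real.log (∏ p ∈ primesLE N, (1 - (1 : ℝ) / p)⁻¹) - 4 := by
        refine sub_le_sub_right (Real.log_le_log hL (le_trans ?_
          (log_add_one_le_prod_primesLE N))) 4
        exact Real.log_le_log (by positivity) (by push_cast; linarith)
    _ = ∑ p ∈ primesLE N, -Real.log (1 - (1 : ℝ) / p) - 4 := by
        rw [Real.log_prod fun p hp ↦ inv_ne_zero (by linarith [hprime hp])]
        simp only [Real.log_inv]
    _ ≤ ∑ p ∈ primesLE N, ((1 : ℝ) / p + 2 * ((1 : ℝ) / p) ^ 2) - 4 := by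
        gcongr with p hp
        exact neg_log_one_sub_le (hprime hp)
    _ ≤ ∑ p ∈ primesLE N, (1 : ℝ) / p := by
        rw [sum_add_distrib, ← mul_sum]
        have hsq := sum_inv_sq_le fun p (hp : p ∈ primesLE N) ↦ (Nat.prime_of_mem_primesLE hp).pos
        rw [Nat.cast_zero, zero_add, div_one] at hsq
        linarith

theorem exists_abs_sum_primesLE_inv_sub_log_log_le :
    ∃ M : ℝ, ∀ N : ℕ, 2 ≤ N →
      |∑ p ∈ primesLE N, (1 : ℝ) / p - Real.log (Real.log N)| ≤ M := by
  refine ⟨max 4 (3 - Real.log (Real.log 2)), fun N hN ↦ abs_sub_le_iff.2 ⟨?_, ?_⟩⟩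
  · exact le_max_of_le_right (by linarith [sum_primesLE_inv_le hN])
  · exact le_max_of_le_left (by linarith [log_log_sub_le_sum_primesLE_inv hN])

end Mertens

section ArithmeticProgressions

theorem dvd_prod_range_add_mul {M D H : ℕ} (hM : M ∣ H.factorial) (hDM : D.Coprime M) (a : ℕ) :
    M ∣ ∏ h ∈ range H, (a + D * h) := by
  obtain ⟨b, -, hb⟩ := Nat.exists_mul_mod_eq_of_coprime a hDM
    (ne_zero_of_dvd_ne_zero H.factorial_ne_zero hM)
  have hmod : ∏ h ∈ range H, (a + D * h) ≡ ∏ h ∈ range H, D * (b + h) [MOD M] :=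
    Nat.ModEq.prod fun h _ ↦ by
      rw [mul_add]
      exact (Nat.ModEq.symm hb).add_right _
  rw [hmod.dvd_iff dvd_rfl, prod_mul_distrib, ← Nat.ascFactorial_eq_prod_range]
  exact (hM.trans (Nat.factorial_dvd_ascFactorial _ _)).mul_left _

theorem prime_pow_factorization_factorial_le {q : ℕ} (hq : q.Prime) (H : ℕ) :
    q ^ H.factorial.factorization q ≤ 2 ^ H := by
  have hle : q ≤ 2 ^ (q - 1) := Nat.le_of_pred_lt Nat.lt_two_pow_self
  have hmul : (q - 1) * H.factorial.factorization q ≤ H := by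
    rw [Nat.sub_one_mul_factorization_factorial hq]
    exact Nat.sub_le _ _
  calc q ^ H.factorial.factorization q ≤ (2 ^ (q - 1)) ^ H.factorial.factorization q :=
        Nat.pow_le_pow_left hle _
    _ = 2 ^ ((q - 1) * H.factorial.factorization q) := (pow_mul _ _ _).symm
    _ ≤ 2 ^ H := Nat.pow_le_pow_right two_pos hmul

variable {q r H a : ℕ} {B : Finset ℕ}

theorem prod_primes_mul_factorial_le (hq : q.Prime) (ha : 0 < a) (haq : a ≤ q ^ r)
    (hprime : ∀ p ∈ B, p.Prime) (hHB : ∀ p ∈ B, H < p)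
    (hprog : ∀ p ∈ B, ∃ h < H, a + q ^ r * h = p) :
    (∏ p ∈ B, p) * H.factorial ≤ (2 * q ^ r * H) ^ H := by
  set v := H.factorial.factorization q
  set M := H.factorial / q ^ v
  have hM : M ∣ H.factorial := Nat.ordCompl_dvd _ _
  have hB : ∏ p ∈ B, p ∣ ∏ h ∈ range H, (a + q ^ r * h) := by
    refine Finset.prod_dvd_of_isRelPrime (fun p hp p' hp' hne ↦ ?_) fun p hp ↦ ?_
    · exact Nat.coprime_iff_isRelPrime.1
        ((Nat.coprime_primes (hprime p hp) (hprime p' hp')).2 hne)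
    · obtain ⟨h, hh, rfl⟩ := hprog p hp
      exact dvd_prod_of_mem (fun h ↦ a + q ^ r * h) (mem_range.2 hh)
  have hcoprime : (∏ p ∈ B, p).Coprime M :=
    Nat.Coprime.prod_left fun p hp ↦ (hprime p hp).coprime_iff_not_dvd.2 fun h ↦
      (hHB p hp).not_ge ((hprime p hp).dvd_factorial.1 (h.trans hM))
  have hdvd : (∏ p ∈ B, p) * M ∣ ∏ h ∈ range H, (a + q ^ r * h) :=
    hcoprime.mul_dvd_of_dvd_of_dvd hB
      (dvd_prod_range_add_mul hM ((Nat.coprime_ordCompl hq H.factorial_ne_zero).pow_left r) a)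
  have hle : (∏ p ∈ B, p) * M ≤ (q ^ r * H) ^ H :=
    calc (∏ p ∈ B, p) * M ≤ ∏ h ∈ range H, (a + q ^ r * h) :=
          Nat.le_of_dvd (prod_pos fun h _ ↦ by omega) hdvd
      _ ≤ (q ^ r * H) ^ #(range H) := prod_le_pow_card _ _ _ fun h hh ↦
          calc a + q ^ r * h ≤ q ^ r * (h + 1) := by rw [mul_add_one]; omega
            _ ≤ q ^ r * H := Nat.mul_le_mul_left _ (mem_range.1 hh)
      _ = (q ^ r * H) ^ H := by rw [card_range]
  calc (∏ p ∈ B, p) * H.factorial = q ^ v * ((∏ p ∈ B, p) * M) := by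
        rw [mul_left_comm, Nat.ordProj_mul_ordCompl_eq_self]
    _ ≤ 2 ^ H * (q ^ r * H) ^ H := Nat.mul_le_mul (prime_pow_factorization_factorial_le hq H) hle
    _ = (2 * q ^ r * H) ^ H := by rw [← mul_pow, mul_assoc]

theorem sum_log_primes_progression_le (hq : q.Prime) (ha : 0 < a) (haq : a ≤ q ^ r)
    (hprime : ∀ p ∈ B, p.Prime) (hHB : ∀ p ∈ B, H < p)
    (hprog : ∀ p ∈ B, ∃ h < H, a + q ^ r * h = p) :
    ∑ p ∈ B, Real.log p ≤ H * Real.log (2 * Real.exp 1 * q ^ r) := by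
  have hmul : ((∏ p ∈ B, p : ℕ) : ℝ) * H.factorial ≤ (2 * q ^ r * H) ^ H := by
    exact_mod_cast prod_primes_mul_factorial_le hq ha haq hprime hHB hprog
  have hexp : (H : ℝ) ^ H / H.factorial ≤ Real.exp 1 ^ H := by
    simpa only [← Real.exp_nat_mul, mul_one] using
      Real.pow_div_factorial_le_exp (H : ℝ) H.cast_nonneg H
  have hprod : ((∏ p ∈ B, p : ℕ) : ℝ) ≤ (2 * Real.exp 1 * q ^ r) ^ H :=
    calc ((∏ p ∈ B, p : ℕ) : ℝ) ≤ (2 * q ^ r * H) ^ H / H.factorial :=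
          (le_div_iff₀ (by positivity)).2 hmul
      _ = (2 * q ^ r) ^ H * (H ^ H / H.factorial) := by rw [mul_pow _ (H : ℝ), mul_div_assoc]
      _ ≤ (2 * q ^ r) ^ H * Real.exp 1 ^ H := by gcongr
      _ = (2 * Real.exp 1 * q ^ r) ^ H := by rw [← mul_pow]; ring
  rw [sum_log_eq_log_prod fun p hp ↦ (hprime p hp).ne_zero, ← Real.log_pow]
  exact Real.log_le_log (mod_cast prod_pos fun p hp ↦ (hprime p hp).pos) hprod

end ArithmeticProgressions

section SquarefreeShifts

theorem eventually_half_le_theta : ∀ᶠ y : ℕ in Filter.atTop, (y : ℝ) / 2 ≤ Chebyshev.theta y := by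
  have hlog : ∀ᶠ x : ℝ in Filter.atTop, ‖Real.log x‖ ≤ 1 / 100 * ‖x ^ (1 / 2 : ℝ)‖ :=
    (isLittleO_log_rpow_atTop (by norm_num)).bound (by norm_num)
  filter_upwards [tendsto_natCast_atTop_atTop.eventually hlog, Filter.eventually_ge_atTop 10]
    with y hlog hy
  have hy : (10 : ℝ) ≤ y := by exact_mod_cast hy
  rw [← Real.sqrt_eq_rpow, Real.norm_of_nonneg (Real.sqrt_nonneg _),
    Real.norm_of_nonneg (Real.log_nonneg (by linarith))] at hlog
  have hsqrt : √(y : ℝ) * √y = y := Real.mul_self_sqrt y.cast_nonneg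
  have hsucc : Real.log (y + 1) ≤ Real.log 2 + Real.log y := by
    rw [← Real.log_mul two_ne_zero (by positivity)]
    exact Real.log_le_log (by positivity) (by linarith)
  have hmul : √(y : ℝ) * Real.log y ≤ 1 / 100 * y := by
    linear_combination √(y : ℝ) * hlog + 1 / 100 * hsqrt
  nlinarith [Chebyshev.theta_ge y, Real.log_two_gt_d9, Real.log_two_lt_d9,
    Real.one_le_sqrt.2 (show (1 : ℝ) ≤ y by linarith)]

theorem sum_Ioc_prime_log_eq_theta_sub {m n : ℕ} (hmn : m ≤ n) :
    ∑ p ∈ Ioc m n with p.Prime, Real.log p = Chebyshev.theta n - Chebyshev.theta m := by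
  rw [eq_sub_iff_add_eq', Chebyshev.theta, Chebyshev.theta, Nat.floor_natCast, Nat.floor_natCast,
    sum_filter, sum_filter, sum_filter]
  exact sum_Ioc_consecutive _ m.zero_le hmn

theorem eventually_le_sum_Ioc_div_prime_log {Q : ℕ} (hQ : 16 ≤ Q) :
    ∀ᶠ y : ℕ in Filter.atTop, 3 / 8 * (y : ℝ) ≤ ∑ p ∈ Ioc (y / Q) y with p.Prime, Real.log p := by
  filter_upwards [eventually_half_le_theta] with y hy
  have hupper := Chebyshev.theta_le_log4_mul_x (Nat.cast_nonneg (α := ℝ) (y / Q))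
  have hdiv : ((y / Q : ℕ) : ℝ) ≤ y / 16 :=
    Nat.cast_div_le.trans (by gcongr; exact_mod_cast hQ)
  have hlog : Real.log 4 ≤ 2 := by
    rw [show (4 : ℝ) = 2 ^ 2 by norm_num, Real.log_pow]
    push_cast
    linarith [Real.log_two_lt_d9]
  rw [sum_Ioc_prime_log_eq_theta_sub (Nat.div_le_self y Q)]
  nlinarith [Nat.cast_nonneg (α := ℝ) (y / Q)]

theorem log_two_exp_mul_sq_le {x : ℝ} (hx : 0 < x) :
    Real.log (2 * Real.exp 1 * x ^ 2) ≤ 4 * √x := by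
  have hlog : Real.log (2 * Real.exp 1 * x ^ 2) = Real.log 2 + 1 + 4 * Real.log √x := by
    rw [Real.log_mul (by positivity) (by positivity), Real.log_mul (by positivity) (by positivity),
      Real.log_exp, Real.log_pow, Real.log_sqrt hx.le]
    push_cast
    ring
  linarith [Real.log_two_lt_d9, Real.log_le_sub_one_of_pos (Real.sqrt_pos.2 hx)]

theorem sum_log_primes_le_of_pow_dvd_mul_add_one {q r m y : ℕ} {B : Finset ℕ} (hq : q.Prime)
    (hr : r ≠ 0) (hprime : ∀ p ∈ B, p.Prime) (hB : ∀ p ∈ B, p ∈ Ioc (y / q ^ r + 1) y)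
    (hdvd : ∀ p ∈ B, q ^ r ∣ m * p + 1) :
    ∑ p ∈ B, Real.log p ≤ (y / q ^ r + 1 : ℕ) * Real.log (2 * Real.exp 1 * q ^ r) := by
  have hcoprime {p : ℕ} (hp : p ∈ B) : (q ^ r).Coprime (m * p) :=
    Nat.Coprime.coprime_dvd_left (hdvd p hp) (by simp)
  obtain rfl | ⟨p₀, hp₀⟩ := B.eq_empty_or_nonempty
  · have hq' : (1 : ℝ) ≤ q ^ r := one_le_pow₀ (mod_cast hq.one_le)
    rw [sum_empty]
    exact mul_nonneg (Nat.cast_nonneg _)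
      (Real.log_nonneg (by nlinarith [Real.add_one_le_exp (1 : ℝ)]))
  have hmod {p : ℕ} (hp : p ∈ B) : p % q ^ r = p₀ % q ^ r := by
    have hmul : m * p ≡ m * p₀ [MOD q ^ r] := Nat.ModEq.add_right_cancel' 1
      ((Nat.modEq_zero_iff_dvd.2 (hdvd p hp)).trans (Nat.modEq_zero_iff_dvd.2 (hdvd p₀ hp₀)).symm)
    exact hmul.cancel_left_of_coprime (hcoprime hp).coprime_mul_right_right
  refine sum_log_primes_progression_le hq (a := p₀ % q ^ r) ?_
    (Nat.mod_lt _ (pow_pos hq.pos r)).le hprime (fun p hp ↦ (mem_Ioc.1 (hB p hp)).1) fun p hp ↦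
      ⟨p / q ^ r, Nat.lt_succ_of_le (Nat.div_le_div_right (mem_Ioc.1 (hB p hp)).2), ?_⟩
  · have hp₀q : (q ^ r).Coprime p₀ := (hcoprime hp₀).coprime_mul_left_right
    refine Nat.emod_pos_of_not_dvd fun h ↦ ?_
    exact (one_lt_pow₀ hq.one_lt hr).ne' (hp₀q.eq_one_of_dvd h)
  · rw [← hmod hp, Nat.mod_add_div]

theorem eventually_forall_sum_le_of_summable {f : ℕ → ℝ} (hf : Summable f) {ε : ℝ} (hε : 0 < ε) :
    ∀ᶠ Q : ℕ in Filter.atTop, ∀ s : Finset ℕ, (∀ n ∈ s, Q < n) → ∑ n ∈ s, f n ≤ ε := by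
  obtain ⟨t, ht⟩ := summable_iff_vanishing_norm.1 hf ε hε
  filter_upwards [Filter.eventually_ge_atTop (t.sup id)] with Q hQ s hs
  refine (le_abs_self _).trans (ht s (disjoint_left.2 fun n hns hnt ↦ ?_)).le
  exact (hs n hns).not_ge ((le_sup (f := id) hnt).trans hQ)

theorem summable_sqrt_div_sq : Summable fun n : ℕ ↦ √(n : ℝ) / n ^ 2 := by
  refine (Real.summable_one_div_nat_rpow.2 (show (1 : ℝ) < 3 / 2 by norm_num)).congr fun n ↦ ?_
  obtain rfl | hn := n.eq_zero_or_pos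
  · norm_num
  have hn : (0 : ℝ) < n := by exact_mod_cast hn
  rw [Real.sqrt_eq_rpow, ← Real.rpow_natCast, ← Real.rpow_sub hn, one_div, ← Real.rpow_neg hn.le]
  norm_num

theorem mul_sqrt_le_of_sq_le {R m y : ℕ} (hm : 0 < m) (hmy : m ^ 5 ≤ y) (hy : 2 ^ 58 ≤ y)
    (hR : R ^ 2 ≤ m * y + 1) : 32 * (R * √(R : ℝ)) ≤ y := by
  have hR' : R ^ 2 ≤ 2 * (m * y) := by nlinarith [Nat.mul_le_mul hm (Nat.one_le_two_pow.trans hy)]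
  have hpow : 32 ^ 20 * R ^ 30 ≤ y ^ 20 :=
    calc 32 ^ 20 * R ^ 30 = 32 ^ 20 * (R ^ 2) ^ 15 := by ring
      _ ≤ 32 ^ 20 * (2 * (m * y)) ^ 15 := by gcongr
      _ = 2 ^ 115 * ((m ^ 5) ^ 3 * y ^ 15) := by ring
      _ ≤ y ^ 2 * (y ^ 3 * y ^ 15) :=
          Nat.mul_le_mul ((by norm_num : 2 ^ 115 ≤ (2 ^ 58) ^ 2).trans (Nat.pow_le_pow_left hy 2))
            (Nat.mul_le_mul_right _ (Nat.pow_le_pow_left hmy 3))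
      _ = y ^ 20 := by ring
  refine le_of_pow_le_pow_left₀ (n := 20) (by norm_num) y.cast_nonneg ?_
  calc (32 * ((R : ℝ) * √R)) ^ 20 = 32 ^ 20 * ((R : ℝ) ^ 20 * (√(R : ℝ) ^ 2) ^ 10) := by ring
    _ = 32 ^ 20 * (R : ℝ) ^ 30 := by rw [Real.sq_sqrt R.cast_nonneg]; ring
    _ ≤ (y : ℝ) ^ 20 := by exact_mod_cast hpow

/-- The primes `p ∈ (y / Q, y]` for which `m * p + 1` is squarefree; they serve as the large prime
factors of the integers `m * p` counted by the theorem. The lower end `y / Q`, rounded down, makes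
them exceed the prime factors of `m`. -/
def squarefreeShiftPrimes (Q y m : ℕ) : Finset ℕ :=
  {p ∈ Ioc (y / Q) y | p.Prime ∧ Squarefree (m * p + 1)}

theorem exists_prime_sq_dvd_of_not_squarefree {Q m n : ℕ} (hQm : primorial Q ∣ m)
    (hmn : ¬Squarefree (m * n + 1)) : ∃ q, q.Prime ∧ Q < q ∧ q ^ 2 ∣ m * n + 1 := by
  rw [Nat.squarefree_iff_prime_squarefree] at hmn
  push Not at hmn
  obtain ⟨q, hq, hdvd⟩ := hmn
  refine ⟨q, hq, not_le.1 fun hqQ ↦ hq.one_lt.ne' ?_, by rwa [sq]⟩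
  have hqm : q ∣ m * n := ((hq.dvd_primorial_iff.2 hqQ).trans hQm).mul_right n
  exact Nat.dvd_one.1 ((Nat.dvd_add_right hqm).1 (dvd_of_mul_left_dvd hdvd))

theorem sum_log_le_of_sq_dvd_mul_add_one {Q q m y : ℕ} (hQ : 2 ≤ Q) (hq : q.Prime) (hQq : Q < q)
    (hy : 2 * Q ≤ y) :
    ∑ p ∈ Ioc (y / Q) y with p.Prime ∧ q ^ 2 ∣ m * p + 1, Real.log p ≤
      4 * y * (√(q : ℝ) / q ^ 2) + 4 * √q := by
  have hlength : y / q ^ 2 + 1 ≤ y / Q :=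
    calc y / q ^ 2 + 1 ≤ y / Q / Q + 1 := by
          rw [Nat.div_div_eq_div_mul, ← sq]; gcongr
      _ ≤ y / Q / 2 + 1 := by gcongr
      _ ≤ y / Q := by have := (Nat.le_div_iff_mul_le (by omega)).2 hy; omega
  have hmem (p) (hp : p ∈ {p ∈ Ioc (y / Q) y | p.Prime ∧ q ^ 2 ∣ m * p + 1}) :
      p ∈ Ioc (y / q ^ 2 + 1) y :=
    Ioc_subset_Ioc_left hlength (mem_filter.1 hp).1
  calc ∑ p ∈ Ioc (y / Q) y with p.Prime ∧ q ^ 2 ∣ m * p + 1, Real.log p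
      ≤ (y / q ^ 2 + 1 : ℕ) * Real.log (2 * Real.exp 1 * q ^ 2) :=
        sum_log_primes_le_of_pow_dvd_mul_add_one hq two_ne_zero
          (fun p hp ↦ (mem_filter.1 hp).2.1) hmem fun p hp ↦ (mem_filter.1 hp).2.2
    _ ≤ (y / q ^ 2 + 1) * (4 * √q) := by
        refine mul_le_mul ?_ (log_two_exp_mul_sq_le (mod_cast hq.pos)) ?_ (by positivity)
        · push_cast
          gcongr
          exact_mod_cast Nat.cast_div_le (α := ℝ) (m := y) (n := q ^ 2)
        · refine Real.log_nonneg ?_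
          nlinarith [Real.add_one_le_exp (1 : ℝ), show (1 : ℝ) ≤ q by exact_mod_cast hq.one_lt.le]
    _ = 4 * y * (√(q : ℝ) / q ^ 2) + 4 * √q := by ring

theorem sum_log_le_sum_squarefreeShiftPrimes_add {Q m y R : ℕ} (hQm : primorial Q ∣ m)
    (hR : m * y + 1 < (R + 1) ^ 2) :
    ∑ p ∈ Ioc (y / Q) y with p.Prime, Real.log p ≤
      ∑ p ∈ squarefreeShiftPrimes Q y m, Real.log p +
        ∑ q ∈ Ioc Q R with q.Prime,
          ∑ p ∈ Ioc (y / Q) y with p.Prime ∧ q ^ 2 ∣ m * p + 1, Real.log p := by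
  rw [← sum_filter_add_sum_filter_not {p ∈ Ioc (y / Q) y | p.Prime}
    (fun p ↦ Squarefree (m * p + 1)),
    filter_filter, filter_filter, squarefreeShiftPrimes]
  refine add_le_add_right ?_ _
  calc ∑ p ∈ Ioc (y / Q) y with p.Prime ∧ ¬Squarefree (m * p + 1), Real.log p
      ≤ ∑ p ∈ Ioc (y / Q) y with p.Prime ∧ ¬Squarefree (m * p + 1),
          ∑ q ∈ Ioc Q R with q.Prime ∧ q ^ 2 ∣ m * p + 1, Real.log p := by
        refine sum_le_sum fun p hp ↦ ?_
        obtain ⟨hpy, -, hsq⟩ := mem_filter.1 hp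
        obtain ⟨q, hq, hQq, hdvd⟩ := exists_prime_sq_dvd_of_not_squarefree hQm hsq
        have hqR : q ^ 2 < (R + 1) ^ 2 :=
          calc q ^ 2 ≤ m * p + 1 := Nat.le_of_dvd (Nat.succ_pos _) hdvd
            _ ≤ m * y + 1 := by gcongr; exact (mem_Ioc.1 hpy).2
            _ < (R + 1) ^ 2 := hR
        have hqR : q ≤ R := Nat.lt_succ_iff.1 (lt_of_pow_lt_pow_left₀ 2 (Nat.zero_le _) hqR)
        exact single_le_sum (f := fun _ ↦ Real.log p) (fun _ _ ↦ Real.log_natCast_nonneg p)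
          (mem_filter.2 ⟨mem_Ioc.2 ⟨hQq, hqR⟩, hq, hdvd⟩)
    _ ≤ ∑ p ∈ Ioc (y / Q) y with p.Prime,
          ∑ q ∈ Ioc Q R with q.Prime ∧ q ^ 2 ∣ m * p + 1, Real.log p :=
        sum_le_sum_of_subset_of_nonneg (monotone_filter_right _ fun _ _ hp ↦ hp.1)
          fun p _ _ ↦ sum_nonneg fun _ _ ↦ Real.log_natCast_nonneg p
    _ = ∑ q ∈ Ioc Q R with q.Prime,
          ∑ p ∈ Ioc (y / Q) y with p.Prime ∧ q ^ 2 ∣ m * p + 1, Real.log p :=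
        sum_comm' fun p q ↦ by simp only [mem_filter]; tauto

theorem exists_le_sum_squarefreeShiftPrimes_log :
    ∃ Q ≥ 16, ∀ᶠ y : ℕ in Filter.atTop, ∀ m > 0, m ^ 5 ≤ y → primorial Q ∣ m →
      (y : ℝ) / 8 ≤ ∑ p ∈ squarefreeShiftPrimes Q y m, Real.log p := by
  obtain ⟨Q, htail, hQ⟩ := ((eventually_forall_sum_le_of_summable summable_sqrt_div_sq
    (show (0 : ℝ) < 1 / 32 by norm_num)).and (Filter.eventually_ge_atTop 16)).exists
  refine ⟨Q, hQ, ?_⟩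
  filter_upwards [eventually_le_sum_Ioc_div_prime_log hQ, Filter.eventually_ge_atTop (2 * Q),
    Filter.eventually_ge_atTop (2 ^ 58)] with y hall hyQ hy m hm hmy hQm
  set R := Nat.sqrt (m * y + 1)
  have hbad (q) (hq : q ∈ {q ∈ Ioc Q R | q.Prime}) :
      ∑ p ∈ Ioc (y / Q) y with p.Prime ∧ q ^ 2 ∣ m * p + 1, Real.log p ≤
        4 * y * (√(q : ℝ) / q ^ 2) + 4 * √R := by
    obtain ⟨hqR, hq⟩ := mem_filter.1 hq
    obtain ⟨hQq, hqR⟩ := mem_Ioc.1 hqR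
    exact (sum_log_le_of_sq_dvd_mul_add_one (by omega) hq hQq hyQ).trans (by gcongr)
  have hcard : (#{q ∈ Ioc Q R | q.Prime} : ℝ) ≤ R := by
    exact_mod_cast (card_filter_le _ _).trans (by rw [Nat.card_Ioc]; exact Nat.sub_le R Q)
  have hlarge : 32 * (R * √(R : ℝ)) ≤ y := mul_sqrt_le_of_sq_le hm hmy hy (Nat.sqrt_le' _)
  have hbad_total : ∑ q ∈ Ioc Q R with q.Prime,
      ∑ p ∈ Ioc (y / Q) y with p.Prime ∧ q ^ 2 ∣ m * p + 1, Real.log p ≤ y / 4 :=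
    calc ∑ q ∈ Ioc Q R with q.Prime,
          ∑ p ∈ Ioc (y / Q) y with p.Prime ∧ q ^ 2 ∣ m * p + 1, Real.log p
        ≤ ∑ q ∈ Ioc Q R with q.Prime, (4 * y * (√(q : ℝ) / q ^ 2) + 4 * √R) := sum_le_sum hbad
      _ = 4 * y * ∑ q ∈ Ioc Q R with q.Prime, √(q : ℝ) / q ^ 2 +
            #{q ∈ Ioc Q R | q.Prime} * (4 * √R) := by
          rw [sum_add_distrib, ← mul_sum, sum_const, nsmul_eq_mul]
      _ ≤ 4 * y * (1 / 32) + R * (4 * √R) := by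
          gcongr
          exact htail _ fun q hq ↦ (mem_Ioc.1 (mem_filter.1 hq).1).1
      _ ≤ y / 4 := by linarith
  linarith [sum_log_le_sum_squarefreeShiftPrimes_add (y := y) hQm (Nat.lt_succ_sqrt' (m * y + 1))]

end SquarefreeShifts

section PoissonWindow

theorem factorial_le_exp_one_mul_sqrt_mul_pow {j : ℕ} (hj : j ≠ 0) :
    (j.factorial : ℝ) ≤ Real.exp 1 * √j * (j / Real.exp 1) ^ j := by
  obtain ⟨i, rfl⟩ := Nat.exists_eq_succ_of_ne_zero hj
  have h : Stirling.stirlingSeq (i + 1) ≤ Stirling.stirlingSeq 1 :=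
    Stirling.stirlingSeq'_antitone i.zero_le
  rw [Stirling.stirlingSeq_one, Stirling.stirlingSeq, Real.sqrt_mul zero_le_two,
    div_le_iff₀ (by positivity)] at h
  refine h.trans_eq ?_
  field_simp

variable {S c : ℝ} {j : ℕ}

theorem pos_of_abs_sub_le_mul_sqrt {t : ℝ} (hcS : c ^ 2 < S) (ht : |t - S| ≤ c * √S) : 0 < t := by
  have hS : √S ^ 2 = S := Real.sq_sqrt ((sq_nonneg c).trans hcS.le)
  have hc : c < √S := Real.lt_sqrt_of_sq_lt hcS
  nlinarith [(abs_le.1 ht).1, Real.sqrt_nonneg S, abs_nonneg (t - S)]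

theorem le_two_mul_of_abs_sub_le_mul_sqrt {t : ℝ} (hcS : c ^ 2 < S) (ht : |t - S| ≤ c * √S) :
    t ≤ 2 * S := by
  have hS : √S ^ 2 = S := Real.sq_sqrt ((sq_nonneg c).trans hcS.le)
  have hc : c < √S := Real.lt_sqrt_of_sq_lt hcS
  nlinarith [(abs_le.1 ht).2, Real.sqrt_nonneg S]

theorem sub_sq_le_mul_one_add_log_div {t : ℝ} (hS : 0 < S) (ht : 0 < t) (h : |t - S| ≤ c * √S) :
    S - c ^ 2 ≤ t * (1 + Real.log (S / t)) := by
  have hsq : (t - S) ^ 2 ≤ c ^ 2 * S := by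
    simpa only [sq_abs, mul_pow, Real.sq_sqrt hS.le] using pow_le_pow_left₀ (abs_nonneg _) h 2
  calc S - c ^ 2 ≤ S - (t - S) ^ 2 / S := by gcongr; exact (div_le_iff₀ hS).2 hsq
    _ = t * (1 + (1 - (S / t)⁻¹)) := by field_simp; ring
    _ ≤ t * (1 + Real.log (S / t)) := by
        gcongr
        exact Real.one_sub_inv_le_log_of_pos (by positivity)

theorem exp_div_sqrt_le_pow_div_factorial (hcS : c ^ 2 < S) (hj : |j - S| ≤ c * √S) :
    Real.exp (S - c ^ 2) / (Real.exp 1 * √(2 * S)) ≤ S ^ j / j.factorial := by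
  have hS : 0 < S := (sq_nonneg c).trans_lt hcS
  have hj₀ : (0 : ℝ) < j := pos_of_abs_sub_le_mul_sqrt hcS hj
  have hexp : Real.exp (j * (1 + Real.log (S / j))) = S ^ j / (j / Real.exp 1) ^ j := by
    rw [Real.exp_nat_mul, Real.exp_add, Real.exp_log (by positivity), ← div_pow]
    congr 1
    field_simp
  calc Real.exp (S - c ^ 2) / (Real.exp 1 * √(2 * S))
      ≤ Real.exp (j * (1 + Real.log (S / j))) / (Real.exp 1 * √j) := by
        gcongr
        · exact sub_sq_le_mul_one_add_log_div hS hj₀ hj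
        · exact le_two_mul_of_abs_sub_le_mul_sqrt hcS hj
    _ = S ^ j / (Real.exp 1 * √j * (j / Real.exp 1) ^ j) := by
        rw [hexp, div_div, mul_comm]
    _ ≤ S ^ j / j.factorial := by
        gcongr
        exact factorial_le_exp_one_mul_sqrt_mul_pow (by exact_mod_cast hj₀.ne')

theorem eventually_forall_abs_sub_le_mul_sqrt {C : ℝ} (hC : 0 ≤ C) (K : ℝ) :
    ∀ᶠ L : ℝ in Filter.atTop, ∀ L' t t' : ℝ, |L - L'| ≤ K → |t' - t| ≤ K →
      |t - L| ≤ C * √L → |t' - L'| ≤ 2 * (C + 1) * √L' := by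
  filter_upwards [Real.tendsto_sqrt_atTop.eventually_ge_atTop (max 1 (2 * K)),
    Filter.eventually_ge_atTop 0] with L hsqrt hL L' t t' hL' ht' ht
  obtain ⟨hone, hK⟩ := max_le_iff.1 hsqrt
  have hsq : √L ^ 2 = L := Real.sq_sqrt hL
  have hhalf : √L / 2 ≤ √L' := Real.le_sqrt_of_sq_le (by nlinarith [(abs_le.1 hL').2])
  calc |t' - L'| ≤ |t' - t| + |t - L| + |L - L'| :=
        (abs_sub_le _ L _).trans (add_le_add_left (abs_sub_le _ _ _) _)
    _ ≤ 2 * (C + 1) * (√L / 2) := by linarith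
    _ ≤ 2 * (C + 1) * √L' := by gcongr

theorem exp_mul_exp_div_sqrt_le {D K L : ℝ} (hSL : |S - L| ≤ K) (hL : D ^ 2 + |K| < L) :
    Real.exp (-K - D ^ 2) * Real.exp L / (8 * Real.exp 1 * √L) ≤
      Real.exp (S - D ^ 2) / (4 * Real.exp 1 * √(2 * S)) := by
  obtain ⟨hlower, hupper⟩ := abs_le.1 hSL
  have hK : K ≤ |K| := le_abs_self K
  have hS₀ : 0 < S := by linarith [sq_nonneg D]
  have hL₀ : 0 < L := by linarith [sq_nonneg D, abs_nonneg K]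
  have hsqrt : √(2 * S) ≤ 2 * √L := by
    rw [Real.sqrt_le_left (by positivity), mul_pow, Real.sq_sqrt hL₀.le]
    linarith [sq_nonneg D]
  calc Real.exp (-K - D ^ 2) * Real.exp L / (8 * Real.exp 1 * √L)
      = Real.exp (-K - D ^ 2 + L) / (4 * Real.exp 1 * (2 * √L)) := by
        rw [Real.exp_add]
        congr 1
        ring
    _ ≤ Real.exp (S - D ^ 2) / (4 * Real.exp 1 * √(2 * S)) := by
        gcongr
        linarith

end PoissonWindow

section SmoothMultiples

/-- The squarefree `N`-smooth multiples `m ≤ N ^ 6` of `primorial Q` with exactly `k` prime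
factors; they serve as the small parts `m` of the integers `m * p` counted by the theorem. -/
def smoothMultiples (Q N k : ℕ) : Finset ℕ :=
  {m ∈ Icc 1 (N ^ 6) | Squarefree m ∧ primorial Q ∣ m ∧ (∀ p ∈ m.primeFactors, p ≤ N) ∧
    #m.primeFactors = k}

variable {Q N : ℕ}

theorem mem_smoothMultiples {k m : ℕ} : m ∈ smoothMultiples Q N k ↔ (0 < m ∧ m ≤ N ^ 6) ∧
    Squarefree m ∧ primorial Q ∣ m ∧ (∀ p ∈ m.primeFactors, p ≤ N) ∧ #m.primeFactors = k := by
  rw [smoothMultiples, mem_filter, mem_Icc, Nat.one_le_iff_ne_zero, Nat.pos_iff_ne_zero]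

theorem mul_mem_squarefree_mul_succ {k m p X : ℕ} (hm : m ∈ smoothMultiples Q N k)
    (hp : p.Prime) (hNp : N < p) (hmp : Squarefree (m * p + 1)) (hX : m * p ≤ X) :
    m * p ∈ {n ∈ Icc 1 X | Squarefree (n * (n + 1)) ∧ #n.primeFactors = k + 1} := by
  obtain ⟨⟨hm₀, -⟩, hsq, -, hsmooth, hcard⟩ := mem_smoothMultiples.1 hm
  have hnot : p ∉ m.primeFactors := fun h ↦ (hsmooth p h).not_gt hNp
  have hcoprime : m.Coprime p := ((hp.coprime_iff_not_dvd).2 fun h ↦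
    hnot (Nat.mem_primeFactors.2 ⟨hp, h, hm₀.ne'⟩)).symm
  refine mem_filter.2 ⟨mem_Icc.2 ⟨Nat.mul_pos hm₀ hp.pos, hX⟩, ?_, ?_⟩
  · rw [Nat.squarefree_mul (by simp), Nat.squarefree_mul hcoprime]
    exact ⟨⟨hsq, hp.prime.irreducible.squarefree⟩, hmp⟩
  · rw [hcoprime.primeFactors_mul, hp.primeFactors, union_comm, ← insert_eq,
      card_insert_of_notMem hnot, hcard]

theorem eq_and_eq_of_mul_prime_eq {k m m' p p' : ℕ} (hm' : m' ∈ smoothMultiples Q N k)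
    (hp : p.Prime) (hp' : p'.Prime) (hNp : N < p) (h : m * p = m' * p') : m = m' ∧ p = p' := by
  obtain ⟨⟨hm₀, -⟩, -, -, hsmooth, -⟩ := mem_smoothMultiples.1 hm'
  have hdvd : p ∣ m' ∨ p ∣ p' := hp.dvd_mul.1 (h ▸ dvd_mul_left p m)
  obtain rfl : p = p' := hdvd.elim
    (fun hpm ↦ absurd (hsmooth p (Nat.mem_primeFactors.2 ⟨hp, hpm, hm₀.ne'⟩)) hNp.not_ge)
    (Nat.prime_dvd_prime_iff_eq hp hp').1
  exact ⟨Nat.eq_of_mul_eq_mul_right hp.pos h, rfl⟩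

theorem sum_card_squarefreeShiftPrimes_le {k X : ℕ}
    (hX : ∀ m ∈ smoothMultiples Q N k, N ≤ X / m / Q) :
    ∑ m ∈ smoothMultiples Q N k, #(squarefreeShiftPrimes Q (X / m) m) ≤
      #{n ∈ Icc 1 X | Squarefree (n * (n + 1)) ∧ #n.primeFactors = k + 1} := by
  have hmem {m p : ℕ} (hm : m ∈ smoothMultiples Q N k)
      (hp : p ∈ squarefreeShiftPrimes Q (X / m) m) :
      p.Prime ∧ N < p ∧ Squarefree (m * p + 1) ∧ m * p ≤ X := by
    obtain ⟨hpX, hp, hsq⟩ := mem_filter.1 hp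
    obtain ⟨hlt, hle⟩ := mem_Ioc.1 hpX
    exact ⟨hp, (hX m hm).trans_lt hlt, hsq, (Nat.mul_le_mul_left m hle).trans (Nat.mul_div_le X m)⟩
  rw [← card_sigma]
  refine card_le_card_of_injOn (fun mp ↦ mp.1 * mp.2) ?_ ?_
  · rintro ⟨m, p⟩ hmp
    obtain ⟨hm, hp⟩ := mem_sigma.1 (mem_coe.1 hmp)
    obtain ⟨hprime, hNp, hsq, hle⟩ := hmem hm hp
    exact mem_coe.2 (mul_mem_squarefree_mul_succ hm hprime hNp hsq hle)
  · rintro ⟨m, p⟩ hmp ⟨m', p'⟩ hmp' h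
    obtain ⟨hm, hp⟩ := mem_sigma.1 (mem_coe.1 hmp)
    obtain ⟨hm', hp'⟩ := mem_sigma.1 (mem_coe.1 hmp')
    obtain ⟨rfl, rfl⟩ :=
      eq_and_eq_of_mul_prime_eq hm' (hmem hm hp).1 (hmem hm' hp').1 (hmem hm hp).2.1 h
    rfl

theorem primorial_mul_prod_mem_smoothMultiples {T : Finset ℕ} (hQN : Q ≤ N)
    (hT : T ⊆ {p ∈ Ioc Q N | p.Prime}) (hle : primorial Q * ∏ p ∈ T, p ≤ N ^ 6) :
    primorial Q * ∏ p ∈ T, p ∈ smoothMultiples Q N (#(Nat.primesLE Q) + #T) := by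
  have hTmem {p : ℕ} (hp : p ∈ T) : (Q < p ∧ p ≤ N) ∧ p.Prime := by
    simpa only [mem_filter, mem_Ioc] using hT hp
  have hdisj : Disjoint (Nat.primesLE Q) T := disjoint_left.2 fun p hpQ hpT ↦
    (Nat.le_of_mem_primesLE hpQ).not_gt (hTmem hpT).1.1
  have hprime (p : ℕ) (hp : p ∈ Nat.primesLE Q ∪ T) : p.Prime :=
    (mem_union.1 hp).elim Nat.prime_of_mem_primesLE fun h ↦ (hTmem h).2
  have hprod : primorial Q * ∏ p ∈ T, p = ∏ p ∈ Nat.primesLE Q ∪ T, p := by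
    rw [prod_union hdisj, primorial_eq_prod_primesLE]
  have hfactors : (primorial Q * ∏ p ∈ T, p).primeFactors = Nat.primesLE Q ∪ T := by
    rw [hprod, Nat.primeFactors_prod hprime]
  refine mem_smoothMultiples.2 ⟨⟨?_, hle⟩, ?_, dvd_mul_right _ _, fun p hp ↦ ?_, ?_⟩
  · exact hprod ▸ prod_pos fun p hp ↦ (hprime p hp).pos
  · rw [hprod]
    exact squarefree_prod_of_pairwise_isCoprime
      (fun p hp p' hp' hne ↦ Nat.coprime_iff_isRelPrime.1
        ((Nat.coprime_primes (hprime p hp) (hprime p' hp')).2 hne))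
      fun p hp ↦ (hprime p hp).prime.irreducible.squarefree
  · rw [hfactors] at hp
    exact (mem_union.1 hp).elim (fun h ↦ (Nat.le_of_mem_primesLE h).trans hQN)
      fun h ↦ (hTmem h).1.2
  · rw [hfactors, card_union_of_disjoint hdisj]

theorem prod_le_pow_of_sum_log_le {T : Finset ℕ} {a n : ℕ} (hT : ∀ p ∈ T, p ≠ 0) (ha : 0 < a)
    (h : ∑ p ∈ T, Real.log p ≤ n * Real.log a) : ∏ p ∈ T, p ≤ a ^ n := by
  rw [sum_log_eq_log_prod hT, ← Real.log_pow] at h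
  have hpos : (0 : ℝ) < (∏ p ∈ T, p : ℕ) := by
    exact_mod_cast prod_pos fun p hp ↦ Nat.pos_of_ne_zero (hT p hp)
  exact_mod_cast (Real.log_le_log_iff hpos (by positivity)).1 h

theorem sum_powersetCard_prod_inv_le (hN : 4 ^ 5 * primorial Q ≤ N) (hQN : Q ≤ N) (j : ℕ) :
    ∑ T ∈ powersetCard j {p ∈ Ioc Q N | p.Prime} with
        ∑ p ∈ T, Real.log (p : ℕ) ≤ 5 * (Real.log N + Real.log 4), ∏ p ∈ T, (1 : ℝ) / p ≤
      primorial Q * ∑ m ∈ smoothMultiples Q N (#(Nat.primesLE Q) + j), (1 : ℝ) / m := by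
  have hQ₀ : 0 < primorial Q := primorial_pos Q
  have hN₀ : 0 < N := by omega
  set 𝒯 : Finset (Finset ℕ) := {T ∈ powersetCard j {p ∈ Ioc Q N | p.Prime} |
    ∑ p ∈ T, Real.log (p : ℕ) ≤ 5 * (Real.log N + Real.log 4)}
  have hprime {T : Finset ℕ} (hT : T ∈ 𝒯) (p : ℕ) (hp : p ∈ T) : p.Prime :=
    (mem_filter.1 ((mem_powersetCard.1 (mem_filter.1 hT).1).1 hp)).2
  have hmem (T : Finset ℕ) (hT : T ∈ 𝒯) : primorial Q * ∏ p ∈ T, p ∈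
      smoothMultiples Q N (#(Nat.primesLE Q) + j) := by
    obtain ⟨hTj, hlog⟩ := mem_filter.1 hT
    obtain ⟨hTsub, rfl⟩ := mem_powersetCard.1 hTj
    refine primorial_mul_prod_mem_smoothMultiples hQN hTsub ?_
    have hprod : ∏ p ∈ T, p ≤ (N * 4) ^ 5 := by
      refine prod_le_pow_of_sum_log_le (fun p hp ↦ (hprime hT p hp).ne_zero) (by omega) ?_
      push_cast
      rwa [Real.log_mul (by positivity) (by norm_num)]
    calc primorial Q * ∏ p ∈ T, p ≤ primorial Q * (N * 4) ^ 5 := by gcongr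
      _ = 4 ^ 5 * primorial Q * N ^ 5 := by ring
      _ ≤ N * N ^ 5 := by gcongr
      _ = N ^ 6 := by ring
  have hinj : Set.InjOn (fun T ↦ primorial Q * ∏ p ∈ T, p) (𝒯 : Set (Finset ℕ)) :=
    fun T hT T' hT' h ↦ by
      rw [← Nat.primeFactors_prod (hprime hT), ← Nat.primeFactors_prod (hprime hT'),
        Nat.eq_of_mul_eq_mul_left hQ₀ h]
  calc ∑ T ∈ 𝒯, ∏ p ∈ T, (1 : ℝ) / p
      = primorial Q * ∑ m ∈ 𝒯.image (fun T ↦ primorial Q * ∏ p ∈ T, p), (1 : ℝ) / m := by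
        rw [sum_image hinj, mul_sum]
        refine sum_congr rfl fun T _ ↦ ?_
        push_cast
        rw [prod_div_distrib, prod_const_one]
        field_simp
    _ ≤ primorial Q * ∑ m ∈ smoothMultiples Q N (#(Nat.primesLE Q) + j), (1 : ℝ) / m := by
        gcongr
        exact image_subset_iff.2 hmem

theorem exists_abs_sum_Ioc_prime_inv_sub_log_log_le (Q : ℕ) : ∃ K : ℝ, ∀ N : ℕ, 2 ≤ N → Q ≤ N →
    |∑ p ∈ Ioc Q N with p.Prime, (1 : ℝ) / p - Real.log (Real.log N)| ≤ K := by
  obtain ⟨M, hM⟩ := exists_abs_sum_primesLE_inv_sub_log_log_le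
  have hQ₀ : 0 ≤ ∑ p ∈ Nat.primesLE Q, (1 : ℝ) / p := sum_nonneg fun p _ ↦ by positivity
  refine ⟨M + ∑ p ∈ Nat.primesLE Q, (1 : ℝ) / p, fun N hN hQN ↦ ?_⟩
  have hsplit : ∑ p ∈ Nat.primesLE Q, (1 : ℝ) / p + ∑ p ∈ Ioc Q N with p.Prime, (1 : ℝ) / p =
      ∑ p ∈ Nat.primesLE N, (1 : ℝ) / p := by
    simp only [Nat.primesLE_eq_filter_Ioc_zero, sum_filter]
    exact sum_Ioc_consecutive _ Q.zero_le hQN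
  have hMertens := abs_le.1 (hM N hN)
  exact abs_le.2 ⟨by linarith, by linarith⟩

theorem exp_div_sqrt_le_sum_smoothMultiples_inv {j : ℕ} {c S : ℝ} (hQ : 16 ≤ Q) (hQN : Q ≤ N)
    (hN : 4 ^ 5 * primorial Q ≤ N) (hS : ∑ p ∈ Ioc Q N with p.Prime, (1 : ℝ) / p = S)
    (hcS : c ^ 2 < S) (hj : |j - S| ≤ c * √S) :
    Real.exp (S - c ^ 2) / (4 * Real.exp 1 * √(2 * S)) ≤
      primorial Q * ∑ m ∈ smoothMultiples Q N (#(Nat.primesLE Q) + j), (1 : ℝ) / m := by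
  have hsq : ∑ p ∈ Ioc Q N with p.Prime, ((1 : ℝ) / p) ^ 2 ≤ 1 / 8 := by
    refine (sum_inv_sq_le fun p hp ↦ (mem_Ioc.1 (mem_filter.1 hp).1).1).trans ?_
    rw [div_le_div_iff₀ (by positivity) (by norm_num)]
    linarith [show (16 : ℝ) ≤ Q by exact_mod_cast hQ]
  have hlog : ∑ p ∈ Ioc Q N with p.Prime, Real.log p * (1 / p) ≤ Real.log N + Real.log 4 := by
    simp only [mul_one_div]
    refine le_trans (sum_le_sum_of_subset_of_nonneg ?_ fun p _ _ ↦ ?_) (sum_primesLE_log_div_le N)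
    · rw [Nat.primesLE_eq_filter_Ioc_zero]
      exact filter_subset_filter _ (Ioc_subset_Ioc_left Q.zero_le)
    · exact div_nonneg (Real.log_natCast_nonneg p) p.cast_nonneg
  have hj₀ : 1 ≤ j := by exact_mod_cast pos_of_abs_sub_le_mul_sqrt hcS hj
  have hB : 0 < Real.log N + Real.log 4 :=
    add_pos_of_nonneg_of_pos (Real.log_natCast_nonneg N) (Real.log_pos (by norm_num))
  calc Real.exp (S - c ^ 2) / (4 * Real.exp 1 * √(2 * S))
      = Real.exp (S - c ^ 2) / (Real.exp 1 * √(2 * S)) / 4 := by rw [div_div]; ring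
    _ ≤ S ^ j / j.factorial / 4 :=
        div_le_div_of_nonneg_right (exp_div_sqrt_le_pow_div_factorial hcS hj) zero_le_four
    _ = S ^ j / (4 * j.factorial) := by rw [div_div, mul_comm]
    _ ≤ ∑ T ∈ powersetCard j {p ∈ Ioc Q N | p.Prime} with
          ∑ p ∈ T, Real.log (p : ℕ) ≤ 5 * (Real.log N + Real.log 4), ∏ p ∈ T, (1 : ℝ) / p := by
        rw [← hS]
        exact pow_div_factorial_le_sum_powersetCard_filter (fun p _ ↦ by positivity)
          (fun p _ ↦ Real.log_natCast_nonneg p) hsq hB hlog hj₀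
          (by rw [hS]; exact le_two_mul_of_abs_sub_le_mul_sqrt hcS hj)
    _ ≤ primorial Q * ∑ m ∈ smoothMultiples Q N (#(Nat.primesLE Q) + j), (1 : ℝ) / m :=
        sum_powersetCard_prod_inv_le hN hQN j

theorem exists_le_sum_smoothMultiples_inv (hQ : 16 ≤ Q) {C : ℝ} (hC : 0 ≤ C) :
    ∃ c > 0, ∀ᶠ N : ℕ in Filter.atTop, ∀ k : ℕ,
      |k - Real.log (Real.log N)| ≤ C * √(Real.log (Real.log N)) →
      c * Real.log N / √(Real.log (Real.log N)) ≤ ∑ m ∈ smoothMultiples Q N k, (1 : ℝ) / m := by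
  obtain ⟨K, hK⟩ := exists_abs_sum_Ioc_prime_inv_sub_log_log_le Q
  set r := #(Nat.primesLE Q)
  set D := 2 * (C + 1)
  have hQ₀ : (0 : ℝ) < primorial Q := by exact_mod_cast primorial_pos Q
  refine ⟨Real.exp (-K - D ^ 2) / (8 * Real.exp 1 * primorial Q), by positivity, ?_⟩
  have hloglog : Filter.Tendsto (fun N : ℕ ↦ Real.log (Real.log N)) Filter.atTop Filter.atTop :=
    Real.tendsto_log_atTop.comp (Real.tendsto_log_atTop.comp tendsto_natCast_atTop_atTop)
  filter_upwards [Filter.eventually_ge_atTop 2, Filter.eventually_ge_atTop Q,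
    Filter.eventually_ge_atTop (4 ^ 5 * primorial Q),
    hloglog.eventually (eventually_forall_abs_sub_le_mul_sqrt hC (max K r)),
    hloglog.eventually_gt_atTop (D ^ 2 + |K|)] with N hN₂ hQN hN hwindow hlarge k hk
  set L := Real.log (Real.log N)
  set S := ∑ p ∈ Ioc Q N with p.Prime, (1 : ℝ) / p with hS
  have hSL : |S - L| ≤ K := hK N hN₂ hQN
  have hDS : D ^ 2 < S := by linarith [(abs_le.1 hSL).1, le_abs_self K]
  have hkr : |(k - r : ℝ) - S| ≤ D * √S := by
    refine hwindow S k _ ((abs_sub_comm L S).trans_le (hSL.trans (le_max_left _ _))) ?_ hk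
    rw [sub_sub_cancel_left, abs_neg, Nat.abs_cast]
    exact le_max_right _ _
  obtain ⟨j, rfl⟩ : ∃ j, k = r + j := Nat.exists_eq_add_of_le (by
    exact_mod_cast (sub_pos.1 (pos_of_abs_sub_le_mul_sqrt hDS hkr)).le)
  have hmain := exp_div_sqrt_le_sum_smoothMultiples_inv hQ hQN hN hS.symm hDS
    (j := j) (by simpa only [Nat.cast_add, add_sub_cancel_left] using hkr)
  have hlog : Real.exp L = Real.log N :=
    Real.exp_log (Real.log_pos (show (1 : ℝ) < N by exact_mod_cast hN₂))
  calc Real.exp (-K - D ^ 2) / (8 * Real.exp 1 * primorial Q) * Real.log N / √L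
      = Real.exp (-K - D ^ 2) * Real.exp L / (8 * Real.exp 1 * √L) / primorial Q := by
        rw [hlog]
        field_simp
    _ ≤ Real.exp (S - D ^ 2) / (4 * Real.exp 1 * √(2 * S)) / primorial Q :=
        div_le_div_of_nonneg_right (exp_mul_exp_div_sqrt_le hSL hlarge) hQ₀.le
    _ ≤ ∑ m ∈ smoothMultiples Q N (r + j), (1 : ℝ) / m := (div_le_iff₀' hQ₀).2 hmain

end SmoothMultiples

section Assembly

theorem log_le_two_mul_log_floor {t : ℝ} (ht : 2 ≤ t) : Real.log t ≤ 2 * Real.log ⌊t⌋₊ := by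
  have hfloor : (2 : ℝ) ≤ ⌊t⌋₊ := by exact_mod_cast Nat.le_floor (by exact_mod_cast ht)
  have hsq : t ≤ (⌊t⌋₊ : ℝ) ^ 2 := (Nat.lt_floor_add_one t).le.trans (by nlinarith)
  simpa only [Real.log_pow, Nat.cast_ofNat] using Real.log_le_log (by linarith) hsq

theorem one_lt_log_of_three_le {x : ℝ} (hx : 3 ≤ x) : 1 < Real.log x :=
  (Real.lt_log_iff_exp_lt (by linarith)).2 (by linarith [Real.exp_one_lt_d9])

theorem eventually_exists_pow_le_and_log_le {P : ℕ → Prop} (hP : ∀ᶠ N in Filter.atTop, P N)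
    {n : ℕ} (hn : n ≠ 0) : ∀ᶠ x : ℝ in Filter.atTop,
      ∃ N, P N ∧ (N : ℝ) ^ n ≤ x ∧ 1 < Real.log N ∧ Real.log N ≤ Real.log x ∧
        Real.log x ≤ 2 * n * Real.log N := by
  have hroot : Filter.Tendsto (fun x : ℝ ↦ x ^ (n⁻¹ : ℝ)) Filter.atTop Filter.atTop :=
    tendsto_rpow_atTop (by positivity)
  filter_upwards [Filter.eventually_ge_atTop 0, hroot.eventually_ge_atTop 2,
    (tendsto_nat_floor_atTop.comp hroot).eventually (hP.and (Filter.eventually_ge_atTop 3))]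
    with x hx hroot ⟨hP, hthree⟩
  have hpow : (x ^ (n⁻¹ : ℝ)) ^ n = x := Real.rpow_inv_natCast_pow hx hn
  have hthree : (3 : ℝ) ≤ ⌊x ^ (n⁻¹ : ℝ)⌋₊ := by exact_mod_cast hthree
  have hfloor : (⌊x ^ (n⁻¹ : ℝ)⌋₊ : ℝ) ^ n ≤ x :=
    (pow_le_pow_left₀ (Nat.cast_nonneg _) (Nat.floor_le (by positivity)) n).trans_eq hpow
  refine ⟨⌊x ^ (n⁻¹ : ℝ)⌋₊, hP, hfloor, one_lt_log_of_three_le hthree, ?_, ?_⟩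
  · exact Real.log_le_log (by linarith) ((le_self_pow₀ (by linarith) hn).trans hfloor)
  · calc Real.log x = n * Real.log (x ^ (n⁻¹ : ℝ)) := by rw [← Real.log_pow, hpow]
      _ ≤ n * (2 * Real.log ⌊x ^ (n⁻¹ : ℝ)⌋₊) := by gcongr; exact log_le_two_mul_log_floor hroot
      _ = 2 * n * Real.log ⌊x ^ (n⁻¹ : ℝ)⌋₊ := by ring

theorem sum_log_le_card_squarefreeShiftPrimes_mul_log (Q y m : ℕ) :
    ∑ p ∈ squarefreeShiftPrimes Q y m, Real.log p ≤
      #(squarefreeShiftPrimes Q y m) * Real.log y := by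
  rw [← nsmul_eq_mul]
  refine sum_le_card_nsmul _ _ _ fun p hp ↦ ?_
  obtain ⟨hpy, hp, -⟩ := mem_filter.1 hp
  exact Real.log_le_log (mod_cast hp.pos) (mod_cast (mem_Ioc.1 hpy).2)

theorem div_mul_inv_le_card_squarefreeShiftPrimes {Q m : ℕ} {x : ℝ} (hx : 1 < x) (hm : 0 < m)
    (hmx : m ≤ x) (hsum : ((⌊x⌋₊ / m : ℕ) : ℝ) / 8 ≤
      ∑ p ∈ squarefreeShiftPrimes Q (⌊x⌋₊ / m) m, Real.log p) :
    x / (16 * Real.log x) * (1 / m) ≤ #(squarefreeShiftPrimes Q (⌊x⌋₊ / m) m) := by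
  have hlogx : 0 < Real.log x := Real.log_pos hx
  have hone : (1 : ℝ) ≤ (⌊x⌋₊ / m : ℕ) := by
    exact_mod_cast (Nat.one_le_div_iff hm).2 (Nat.le_floor hmx)
  have hlower : x / m / 2 ≤ (⌊x⌋₊ / m : ℕ) := by
    have hlt := Nat.lt_floor_add_one (x / m)
    rw [Nat.floor_div_natCast] at hlt
    linarith
  have hupper : ((⌊x⌋₊ / m : ℕ) : ℝ) ≤ x :=
    (Nat.cast_le.2 (Nat.div_le_self _ m)).trans (Nat.floor_le (by linarith))
  have hlog : x / m / 16 ≤ #(squarefreeShiftPrimes Q (⌊x⌋₊ / m) m) * Real.log x :=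
    calc x / m / 16 ≤ ((⌊x⌋₊ / m : ℕ) : ℝ) / 8 := by linarith
      _ ≤ #(squarefreeShiftPrimes Q (⌊x⌋₊ / m) m) * Real.log (⌊x⌋₊ / m : ℕ) :=
          hsum.trans (sum_log_le_card_squarefreeShiftPrimes_mul_log _ _ _)
      _ ≤ #(squarefreeShiftPrimes Q (⌊x⌋₊ / m) m) * Real.log x := by gcongr
  calc x / (16 * Real.log x) * (1 / m) = x / m / 16 / Real.log x := by field_simp
    _ ≤ #(squarefreeShiftPrimes Q (⌊x⌋₊ / m) m) := (div_le_iff₀ hlogx).2 hlog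

theorem le_div_div_of_mem_smoothMultiples {Q N k m X : ℕ} (hm : m ∈ smoothMultiples Q N k)
    (hQ : 0 < Q) (hQN : Q ≤ N) (hX : N ^ 36 ≤ X) : N ≤ X / m / Q := by
  obtain ⟨⟨hm₀, hmN⟩, -⟩ := mem_smoothMultiples.1 hm
  rw [Nat.div_div_eq_div_mul, Nat.le_div_iff_mul_le (Nat.mul_pos hm₀ hQ)]
  calc N * (m * Q) ≤ N * (N ^ 6 * N) := by gcongr
    _ = N ^ 8 := by ring
    _ ≤ X := (Nat.pow_le_pow_right (hQ.trans_le hQN) (by norm_num)).trans hX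

theorem pow_five_le_div_of_mem_smoothMultiples {Q N k m X : ℕ} (hm : m ∈ smoothMultiples Q N k)
    (hX : N ^ 36 ≤ X) : m ^ 5 ≤ X / m := by
  obtain ⟨⟨hm₀, hmN⟩, -⟩ := mem_smoothMultiples.1 hm
  rw [Nat.le_div_iff_mul_le hm₀]
  calc m ^ 5 * m = m ^ 6 := by ring
    _ ≤ (N ^ 6) ^ 6 := by gcongr
    _ = N ^ 36 := by ring
    _ ≤ X := hX

theorem mul_sum_smoothMultiples_inv_le_card {Q N : ℕ} (k : ℕ) {x : ℝ} (hQ : 0 < Q) (hQN : Q ≤ N)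
    (hN : 2 ≤ N) (hNx : (N : ℝ) ^ 36 ≤ x)
    (hprimes : ∀ y ≥ N, ∀ m > 0, m ^ 5 ≤ y → primorial Q ∣ m →
      (y : ℝ) / 8 ≤ ∑ p ∈ squarefreeShiftPrimes Q y m, Real.log p) :
    x / (16 * Real.log x) * ∑ m ∈ smoothMultiples Q N k, (1 : ℝ) / m ≤
      #{n ∈ Icc 1 ⌊x⌋₊ | Squarefree (n * (n + 1)) ∧ #n.primeFactors = k + 1} := by
  have hx : 1 < x := (one_lt_pow₀ (by exact_mod_cast hN) (by norm_num)).trans_le hNx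
  have hX : N ^ 36 ≤ ⌊x⌋₊ := Nat.le_floor (by exact_mod_cast hNx)
  have hdiv (m) (hm : m ∈ smoothMultiples Q N k) : N ≤ ⌊x⌋₊ / m / Q :=
    le_div_div_of_mem_smoothMultiples hm hQ hQN hX
  have hcard (m) (hm : m ∈ smoothMultiples Q N k) :
      x / (16 * Real.log x) * (1 / m) ≤ #(squarefreeShiftPrimes Q (⌊x⌋₊ / m) m) := by
    obtain ⟨⟨hm₀, hmN⟩, -, hQm, -⟩ := mem_smoothMultiples.1 hm
    have hmX : m ≤ ⌊x⌋₊ := hmN.trans ((Nat.pow_le_pow_right (by omega) (by norm_num)).trans hX)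
    refine div_mul_inv_le_card_squarefreeShiftPrimes hx hm₀ ((Nat.le_floor_iff (by linarith)).1 hmX)
      (hprimes _ ((hdiv m hm).trans (Nat.div_le_self _ _)) m hm₀ ?_ hQm)
    exact pow_five_le_div_of_mem_smoothMultiples hm hX
  calc x / (16 * Real.log x) * ∑ m ∈ smoothMultiples Q N k, (1 : ℝ) / m
      ≤ ∑ m ∈ smoothMultiples Q N k, (#(squarefreeShiftPrimes Q (⌊x⌋₊ / m) m) : ℝ) := by
        rw [mul_sum]
        exact sum_le_sum hcard
    _ ≤ #{n ∈ Icc 1 ⌊x⌋₊ | Squarefree (n * (n + 1)) ∧ #n.primeFactors = k + 1} := by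
        exact_mod_cast sum_card_squarefreeShiftPrimes_le hdiv

theorem abs_log_sub_log_le {a b D : ℝ} (ha : 0 < a) (hab : a ≤ b) (hb : b ≤ D * a) :
    |Real.log b - Real.log a| ≤ Real.log D := by
  have hb₀ : 0 < b := ha.trans_le hab
  rw [abs_of_nonneg (sub_nonneg.2 (Real.log_le_log ha hab)),
    ← Real.log_div hb₀.ne' ha.ne']
  exact Real.log_le_log (div_pos hb₀ ha) ((div_le_iff₀ ha).2 hb)

theorem mul_div_sqrt_log_le {a b c D x : ℝ} (hc : 0 ≤ c) (hD : 0 < D) (hx : 0 ≤ x) (ha : 1 < a)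
    (hab : a ≤ b) (hb : b ≤ D * a) :
    c / (16 * D) * x / √(Real.log b) ≤ x / (16 * b) * (c * a / √(Real.log a)) := by
  have ha₀ : 0 < √(Real.log a) := Real.sqrt_pos.2 (Real.log_pos ha)
  have hb₀ : 0 < b := by linarith
  calc c / (16 * D) * x / √(Real.log b)
      = x / (16 * b) * (c * (b / D) / √(Real.log b)) := by field_simp
    _ ≤ x / (16 * b) * (c * a / √(Real.log a)) := by
        gcongr
        exact (div_le_iff₀' hD).2 hb

theorem mul_div_sqrt_log_log_le_card {Q N k : ℕ} {c D x : ℝ} (hQ : 0 < Q) (hQN : Q ≤ N)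
    (hNx : (N : ℝ) ^ 36 ≤ x)
    (hprimes : ∀ y ≥ N, ∀ m > 0, m ^ 5 ≤ y → primorial Q ∣ m →
      (y : ℝ) / 8 ≤ ∑ p ∈ squarefreeShiftPrimes Q y m, Real.log p)
    (hc : 0 ≤ c) (hD : 0 < D) (hlogN : 1 < Real.log N) (hlog : Real.log N ≤ Real.log x)
    (hlogx : Real.log x ≤ D * Real.log N)
    (hsmooth : c * Real.log N / √(Real.log (Real.log N)) ≤
      ∑ m ∈ smoothMultiples Q N k, (1 : ℝ) / m) :
    c / (16 * D) * x / √(Real.log (Real.log x)) ≤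
      #{n ∈ Icc 1 ⌊x⌋₊ | Squarefree (n * (n + 1)) ∧ #n.primeFactors = k + 1} := by
  have hx : 0 ≤ x := (pow_nonneg N.cast_nonneg 36).trans hNx
  have hN : (1 : ℝ) < N := (Real.log_pos_iff N.cast_nonneg).1 (by linarith)
  calc c / (16 * D) * x / √(Real.log (Real.log x))
      ≤ x / (16 * Real.log x) * (c * Real.log N / √(Real.log (Real.log N))) :=
        mul_div_sqrt_log_le hc hD hx hlogN hlog hlogx
    _ ≤ x / (16 * Real.log x) * ∑ m ∈ smoothMultiples Q N k, (1 : ℝ) / m :=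
        mul_le_mul_of_nonneg_left hsmooth (div_nonneg hx (by linarith))
    _ ≤ #{n ∈ Icc 1 ⌊x⌋₊ | Squarefree (n * (n + 1)) ∧ #n.primeFactors = k + 1} :=
        mul_sum_smoothMultiples_inv_le_card k hQ hQN (mod_cast hN) hNx hprimes

end Assembly

/-- For each fixed `C > 0` there is `c_C > 0` such that for all large `x` and all
integers `k` with `|k - log log x| ≤ C √(log log x)`, the number of `n ≤ x` with
`n(n+1)` squarefree and `ω(n) = k` is at least `c_C x / √(log log x)`. -/
theorem stmt7 (C : ℝ) (hC : 0 < C) :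
    ∃ c : ℝ, 0 < c ∧ ∃ x₀ : ℝ, ∀ x : ℝ, x₀ ≤ x → ∀ k : ℕ,
      |(k : ℝ) - Real.log (Real.log x)| ≤ C * Real.sqrt (Real.log (Real.log x)) →
      c * x / Real.sqrt (Real.log (Real.log x)) ≤
        (((Finset.Icc 1 ⌊x⌋₊).filter
          (fun n => Squarefree (n * (n + 1)) ∧ n.primeFactors.card = k)).card : ℝ) := by
  obtain ⟨Q, hQ, hprimes⟩ := exists_le_sum_squarefreeShiftPrimes_log
  obtain ⟨c, hc, hsmooth⟩ := exists_le_sum_smoothMultiples_inv hQ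
    (show 0 ≤ 2 * (C + 1) by positivity)
  refine ⟨c / (16 * (2 * (36 : ℕ))), by positivity, Filter.eventually_atTop.1 ?_⟩
  have hloglog := Real.tendsto_log_atTop.comp Real.tendsto_log_atTop
  filter_upwards [eventually_exists_pow_le_and_log_le (n := 36)
      ((Filter.eventually_ge_atTop Q).and
        ((Filter.eventually_forall_ge_atTop.2 hprimes).and hsmooth)) (by norm_num),
    hloglog.eventually_gt_atTop (C ^ 2),
    hloglog.eventually (eventually_forall_abs_sub_le_mul_sqrt hC.le
      (max 1 (Real.log (2 * (36 : ℕ)))))]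
    with x ⟨N, ⟨hQN, hprimes, hsmooth⟩, hNx, hlogN, hlog, hlogx⟩ hCL hwindow k hk
  obtain ⟨k, rfl⟩ := Nat.exists_eq_succ_of_ne_zero (n := k)
    (Nat.cast_ne_zero.1 (pos_of_abs_sub_le_mul_sqrt hCL hk).ne')
  have hloglogN : |Real.log (Real.log x) - Real.log (Real.log N)| ≤ Real.log (2 * (36 : ℕ)) :=
    abs_log_sub_log_le (by linarith) hlog hlogx
  have hkN := hwindow _ (k + 1 : ℕ) k (hloglogN.trans (le_max_right _ _)) (by simp) hk
  exact mul_div_sqrt_log_log_le_card (by omega) hQN hNx hprimes hc.le (by positivity) hlogN hlog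
    hlogx (hsmooth k hkN)
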